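/- Let 0 < t < π and define J(θ) = ∫₀¹ θ'(z)² − t² cos²θ(z) dz on 𝒞 = {θ ∈ W^{1,2}(0,1) : θ(0) = θ(1) = π/2}. Then the constant function θ ≡ π/2 is a strict weak local minimizer of J: there is ε > 0 such that J(θ) > J(π/2) = −? in fact J(θ) > 0 = J(π/2) for every θ ∈ 𝒞 with 0 < ‖θ − π/2‖_{W^{1,∞}} < ε. -/

import Mathlib

open Set MeasureTheory Real

noncomputable section

/-- `J(θ) = ∫₀¹ θ'(z)² − t² cos²θ(z) dz`. -/
def Jfun (t : ℝ) (θ : ℝ → ℝ) : ℝ :=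
  ∫ z in (0 : ℝ)..1, ((deriv θ z) ^ 2 - t ^ 2 * Real.cos (θ z) ^ 2)

/-- Membership in `𝒞 = {θ ∈ W^{1,2}(0,1) : θ(0) = θ(1) = π/2}`:
`θ` is (absolutely) continuous on `[0,1]` with square-integrable derivative and
the boundary values `π/2`. -/
def MemC (θ : ℝ → ℝ) : Prop :=
  ContinuousOn θ (Icc (0 : ℝ) 1) ∧
  IntegrableOn (fun z => (deriv θ z) ^ 2) (Ioo (0 : ℝ) 1) volume ∧
  (∀ z ∈ Icc (0 : ℝ) 1, θ z = θ 0 + ∫ s in (0 : ℝ)..z, deriv θ s) ∧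
  θ 0 = π / 2 ∧ θ 1 = π / 2

/-- The `W^{1,∞}(0,1)` distance of `θ` to the constant `π/2`. -/
def w1infDist (θ : ℝ → ℝ) : ℝ :=
  (⨆ z ∈ Icc (0 : ℝ) 1, |θ z - π / 2|) + ⨆ z ∈ Icc (0 : ℝ) 1, |deriv θ z|

/-- `z ↦ s tan (s (z − 1/2))` solves the Riccati equation `g' = s² + g²` on `[0,1]` if `0 < s < π`. -/
theorem hasDerivAt_riccati {s : ℝ} (hs : 0 < s) (hsπ : s < π) {z : ℝ} (hz : z ∈ Icc (0 : ℝ) 1) :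
    HasDerivAt (fun z => s * Real.tan (s * (z - 1 / 2)))
      (s ^ 2 + (s * Real.tan (s * (z - 1 / 2))) ^ 2) z := by
  have hc : Real.cos (s * (z - 1 / 2)) ≠ 0 :=
    (Real.cos_pos_of_mem_Ioo
      ⟨by nlinarith [hz.1, hz.2], by nlinarith [hz.1, hz.2]⟩).ne'
  have h1 : HasDerivAt (fun z : ℝ => s * (z - 1 / 2)) (s * 1) z :=
    ((hasDerivAt_id z).sub_const _).const_mul s
  have h2 := ((Real.hasDerivAt_tan hc).comp z h1).const_mul s
  refine h2.congr_deriv ?_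
  rw [Real.tan_eq_sin_div_cos]
  generalize s * (z - 1 / 2) = x at hc ⊢
  field_simp
  exact (Real.cos_sq_add_sin_sq x).symm

theorem contDiffOn_riccati {s : ℝ} (hs : 0 < s) (hsπ : s < π) :
    ContDiffOn ℝ 1 (fun z => s * Real.tan (s * (z - 1 / 2))) (uIcc (0 : ℝ) 1) := by
  intro z hz
  rw [uIcc_of_le zero_le_one] at hz
  have hc : Real.cos (s * (z - 1 / 2)) ≠ 0 :=
    (Real.cos_pos_of_mem_Ioo
      ⟨by nlinarith [hz.1, hz.2], by nlinarith [hz.1, hz.2]⟩).ne'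
  have h : ContDiffAt ℝ 1 (fun z => s * Real.tan (s * (z - 1 / 2))) z := by
    refine contDiffAt_const.mul
      ((Real.contDiffAt_tan.2 hc).comp z (f := fun z : ℝ => s * (z - 1 / 2)) ?_)
    fun_prop
  exact h.contDiffWithinAt

/-- A Wirtinger-type inequality for absolutely continuous functions vanishing at `0` and `1`. -/
theorem integral_deriv_sq_sub_nonneg {s : ℝ} (hs : 0 < s) (hsπ : s < π) {F : ℝ → ℝ}
    (hF : AbsolutelyContinuousOnInterval F 0 1) (h0 : F 0 = 0) (h1 : F 1 = 0)
    (hint : IntervalIntegrable (fun z => deriv F z ^ 2) volume 0 1) :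
    0 ≤ ∫ z in (0 : ℝ)..1, (deriv F z ^ 2 - s ^ 2 * F z ^ 2) := by
  set g : ℝ → ℝ := fun z => s * Real.tan (s * (z - 1 / 2)) with hg
  have hgac : AbsolutelyContinuousOnInterval g 0 1 :=
    (contDiffOn_riccati hs hsπ).absolutelyContinuousOnInterval
  have hFF : AbsolutelyContinuousOnInterval (F * F) 0 1 := hF.mul hF
  have hK := hgac.integral_deriv_mul_eq_sub hFF
  have hKint : IntervalIntegrable
      (fun x => deriv g x * (F * F) x + g x * deriv (F * F) x) volume 0 1 :=
    (hgac.intervalIntegrable_deriv.mul_continuousOn hFF.continuousOn).add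
      (hFF.intervalIntegrable_deriv.continuousOn_mul hgac.continuousOn)
  have hA : IntervalIntegrable (fun z => deriv F z ^ 2 - s ^ 2 * F z ^ 2) volume 0 1 :=
    hint.sub (continuousOn_const.mul (hF.continuousOn.pow 2)).intervalIntegrable
  have hsum := intervalIntegral.integral_add hA hKint
  rw [hK] at hsum
  simp only [Pi.mul_apply, h0, h1, mul_zero, sub_zero, add_zero] at hsum
  rw [← hsum]
  refine intervalIntegral.integral_nonneg_of_ae_restrict zero_le_one ?_
  rw [Filter.EventuallyLE, ae_restrict_iff' measurableSet_Icc]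
  filter_upwards [hF.ae_differentiableAt] with x hx hxI
  have hd := (hx (by rwa [uIcc_of_le zero_le_one])).hasDerivAt
  have hg' : deriv g x = s ^ 2 + g x ^ 2 := (hasDerivAt_riccati hs hsπ hxI).deriv
  have hFd : deriv (F * F) x = deriv F x * F x + F x * deriv F x := (hd.mul hd).deriv
  rw [hg', hFd]
  simp only [Pi.zero_apply]
  nlinarith [sq_nonneg (deriv F x + g x * F x)]

theorem w1infDist_eq_zero_of_eqOn {θ : ℝ → ℝ} (h : ∀ z ∈ Ioo (0 : ℝ) 1, θ z = π / 2)
    (h0 : θ 0 = π / 2) (h1 : θ 1 = π / 2) : w1infDist θ = 0 := by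
  have hθ : ∀ z ∈ Icc (0 : ℝ) 1, θ z = π / 2 := by
    intro z hz
    rcases eq_endpoints_or_mem_Ioo_of_mem_Icc hz with rfl | rfl | hz
    exacts [h0, h1, h z hz]
  have hd : ∀ z ∈ Icc (0 : ℝ) 1, deriv θ z = 0 := by
    intro z hz
    by_cases hdiff : DifferentiableAt ℝ θ z
    · have hu := uniqueDiffOn_Icc (zero_lt_one (α := ℝ)) z hz
      rw [← hdiff.derivWithin hu, derivWithin_congr hθ (hθ z hz)]
      simp
    · exact deriv_zero_of_not_differentiableAt hdiff
  have e1 : ∀ z : ℝ, (⨆ _ : z ∈ Icc (0 : ℝ) 1, |θ z - π / 2|) = 0 := fun z => by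
    by_cases hz : z ∈ Icc (0 : ℝ) 1
    · rw [ciSup_pos hz, hθ z hz, sub_self, abs_zero]
    · have : IsEmpty (z ∈ Icc (0 : ℝ) 1) := ⟨hz⟩
      exact Real.iSup_of_isEmpty _
  have e2 : ∀ z : ℝ, (⨆ _ : z ∈ Icc (0 : ℝ) 1, |deriv θ z|) = 0 := fun z => by
    by_cases hz : z ∈ Icc (0 : ℝ) 1
    · rw [ciSup_pos hz, hd z hz, abs_zero]
    · have : IsEmpty (z ∈ Icc (0 : ℝ) 1) := ⟨hz⟩
      exact Real.iSup_of_isEmpty _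
  simp only [w1infDist, e1, e2, ciSup_const, add_zero]

/-- `J` is positive on every nonconstant member of `𝒞`, without any smallness condition. -/
theorem Jfun_pos_of_ne {t : ℝ} (ht : 0 < t) (htπ : t < π) {θ : ℝ → ℝ} (hθ : MemC θ) {c : ℝ}
    (hc : c ∈ Ioo (0 : ℝ) 1) (hne : θ c ≠ π / 2) : 0 < Jfun t θ := by
  obtain ⟨hcont, hint, hrep, h0, h1⟩ := hθ
  have hL2 : IntervalIntegrable (fun z => deriv θ z ^ 2) volume 0 1 := by
    rwa [intervalIntegrable_iff_integrableOn_Ioo_of_le zero_le_one]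
  have hL1 : IntervalIntegrable (deriv θ) volume 0 1 := by
    refine (hL2.add (intervalIntegrable_const (c := (1 : ℝ)))).mono_fun'
      (aestronglyMeasurable_deriv θ _) (Filter.Eventually.of_forall fun z => ?_)
    simp only [Real.norm_eq_abs]
    nlinarith [sq_abs (deriv θ z), sq_nonneg (|deriv θ z| - 1), abs_nonneg (deriv θ z)]
  set F : ℝ → ℝ := fun z => ∫ v in (0 : ℝ)..z, deriv θ v with hFdef
  have hFθ : ∀ z ∈ Icc (0 : ℝ) 1, θ z = π / 2 + F z := fun z hz => by rw [hrep z hz, h0]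
  have hF : AbsolutelyContinuousOnInterval F 0 1 :=
    hL1.absolutelyContinuousOnInterval_intervalIntegral (by simp)
  have hF' : ∀ z ∈ Ioo (0 : ℝ) 1, deriv θ z = deriv F z := by
    intro z hz
    have : θ =ᶠ[nhds z] fun z => π / 2 + F z := by
      filter_upwards [Ioo_mem_nhds hz.1 hz.2] with y hy using hFθ y (Ioo_subset_Icc_self hy)
    rw [this.deriv_eq, deriv_const_add]
  have hF0 : F 0 = 0 := by simp [hFdef]
  have hF1 : F 1 = 0 := by
    have := hFθ 1 (by simp)
    linarith
  have hFc : F c ≠ 0 := fun h => hne (by rw [hFθ c (Ioo_subset_Icc_self hc), h, add_zero])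
  have hFL2 : IntervalIntegrable (fun z => deriv F z ^ 2) volume 0 1 := by
    rw [intervalIntegrable_iff_integrableOn_Ioo_of_le zero_le_one]
    exact hint.congr_fun (fun z hz => by simp only [hF' z hz]) measurableSet_Ioo
  have hFcont : ContinuousOn F (Icc 0 1) := by
    simpa [uIcc_of_le (zero_le_one (α := ℝ))] using hF.continuousOn
  have hF2 : IntervalIntegrable (fun z => F z ^ 2) volume 0 1 :=
    (hF.continuousOn.pow 2).intervalIntegrable
  obtain ⟨s, hts, hsπ⟩ := exists_between htπ
  have hW := integral_deriv_sq_sub_nonneg (ht.trans hts) hsπ hF hF0 hF1 hFL2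
  have hpos : 0 < ∫ z in (0 : ℝ)..1, F z ^ 2 :=
    intervalIntegral.integral_pos zero_lt_one (hFcont.pow 2) (fun z _ => sq_nonneg _)
      ⟨c, Ioo_subset_Icc_self hc, by positivity⟩
  rw [intervalIntegral.integral_sub hFL2 (hF2.const_mul _),
    intervalIntegral.integral_const_mul] at hW
  have hle : (∫ z in (0 : ℝ)..1, (deriv F z ^ 2 - t ^ 2 * F z ^ 2)) ≤ Jfun t θ := by
    have hcos : IntervalIntegrable (fun z => t ^ 2 * Real.cos (θ z) ^ 2) volume 0 1 := by
      refine ContinuousOn.intervalIntegrable ?_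
      rw [uIcc_of_le zero_le_one]
      exact continuousOn_const.mul ((Real.continuous_cos.comp_continuousOn hcont).pow 2)
    refine intervalIntegral.integral_mono_on_of_le_Ioo zero_le_one
      (hFL2.sub (hF2.const_mul _)) (hL2.sub hcos) fun z hz => ?_
    rw [hF' z hz, hFθ z (Ioo_subset_Icc_self hz), add_comm, Real.cos_add_pi_div_two, neg_sq]
    have : Real.sin (F z) ^ 2 ≤ F z ^ 2 := sq_le_sq.2 Real.abs_sin_le_abs
    gcongr
  rw [intervalIntegral.integral_sub hFL2 (hF2.const_mul _),
    intervalIntegral.integral_const_mul] at hle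
  have hst : t ^ 2 < s ^ 2 := by gcongr
  nlinarith [mul_lt_mul_of_pos_right hst hpos]

/-- **Strict weak local minimality of `θ ≡ π/2` for `0 < t < π`.**
There is `ε > 0` such that `J(θ) > 0 = J(π/2)` for every `θ ∈ 𝒞` with
`0 < ‖θ − π/2‖_{W^{1,∞}} < ε`. -/
theorem halfpi_strict_weak_local_min (t : ℝ) (ht : 0 < t) (htπ : t < π) :
    ∃ ε > (0 : ℝ), ∀ θ : ℝ → ℝ, MemC θ →
      0 < w1infDist θ → w1infDist θ < ε → 0 < Jfun t θ := by
  refine ⟨1, one_pos, fun θ hθ hpos _ => ?_⟩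
  by_contra hJ
  refine hpos.ne' (w1infDist_eq_zero_of_eqOn (fun z hz => ?_) hθ.2.2.2.1 hθ.2.2.2.2)
  by_contra hne
  exact hJ (Jfun_pos_of_ne ht htπ hθ hz hne)

end
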